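/- For any MDP M given by a symbolic description and any well-labeled finished PASG P for M with root n₀ labeled by the initial valuation, the maximal probability of reaching a target node in the MDP induced by P is at least as high as the maximal probability of reaching a target state in M. -/

import Mathlib

/-!
The relation "`s` lies in the concretization of the abstract label of `n`" is a simulation of `M`
by the graph. Related `s` and `n` enable the same commands (A2), so targets correspond. If `n` is
covered, its covering node is again related to `s` (C2) and is not covered itself (C3). If `n` is
not covered, it is expanded, and each assignment `a` of a command leads to a node related to `a s`
(B2). Hence one step of `M` is matched by at most two steps of the graph.

Reachability probabilities are suprema of their step-bounded versions `reachB`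
(`MDP.reachProbFrom_eq_iSup`), which satisfy a one-step recursion. By induction on the bound `k`,
every strategy in `M` from `s` is matched within `2 * k + 1` steps by a valid strategy from any
related node (`PASG.exists_valid_reachB_le`). The matching strategy is glued from a first action and
one strategy per successor node (`MDP.exists_glue`). Since distinct assignments lead to distinct
nodes, a successor node determines the assignment taken, and with it the next state of `M` and the
continuation to be matched.
-/

open scoped ENNReal

/-- A Markov decision process with state space `S` and action set `A`:
`P s a s'` is the transition probability. For the MDPs considered here, for every
`s, a` the total mass `∑' s', P s a s'` is `1` (the action is enabled) or `0`. -/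
structure MDP (S : Type*) (A : Type*) where
  P : S → A → S → ℝ≥0∞
  init : S

namespace MDP

variable {S A : Type*}

/-- An action is enabled in a state iff its outgoing probabilities sum to one. -/
def Enabled (M : MDP S A) (s : S) (a : A) : Prop :=
  (∑' s', M.P s a s') = 1

/-- The last state of a history (a list of action/state steps), given the start state. -/
def lastSt (s : S) (h : List (A × S)) : S :=
  ((h.getLast?).map Prod.snd).getD s

open Classical in
/-- Probability of a finite path (a list of action/state steps) from state `s` with
accumulated history `h`, under the (history-dependent) strategy `σ`. -/
noncomputable def pathProb (M : MDP S A) (σ : List (A × S) → A) :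
    S → List (A × S) → List (A × S) → ℝ≥0∞
  | _, _, [] => 1
  | s, h, (a, s') :: rest =>
      (if σ h = a then M.P s a s' else 0) * pathProb M σ s' (h ++ [(a, s')]) rest

/-- The path visits the target set `E` exactly at its final state and never before. -/
def FirstHit (E : Set S) : S → List (A × S) → Prop
  | s, [] => s ∈ E
  | s, (_, s') :: rest => s ∉ E ∧ FirstHit E s' rest

/-- A finite trace: every step has positive probability. -/
def IsTrace (M : MDP S A) : S → List (A × S) → Prop
  | _, [] => True
  | s, (a, s') :: rest => 0 < M.P s a s' ∧ IsTrace M s' rest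

/-- A strategy is valid from `s₀` if it always chooses an enabled action
whenever some action is enabled in the current state. -/
def ValidFrom (M : MDP S A) (s₀ : S) (σ : List (A × S) → A) : Prop :=
  ∀ h : List (A × S), (∃ a, M.Enabled (lastSt s₀ h) a) → M.Enabled (lastSt s₀ h) (σ h)

/-- Probability of reaching `E` from `s₀` under strategy `σ`: the total mass of the
(pairwise incompatible) first-hitting paths. -/
noncomputable def reachProbFrom (M : MDP S A) (σ : List (A × S) → A) (s₀ : S)
    (E : Set S) : ℝ≥0∞ :=
  ∑' l : {l : List (A × S) // FirstHit E s₀ l}, pathProb M σ s₀ [] l.1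

/-- Maximal probability of reaching `E` from `s`. -/
noncomputable def PmaxFrom (M : MDP S A) (E : Set S) (s : S) : ℝ≥0∞ :=
  ⨆ σ : {σ : List (A × S) → A // ValidFrom M s σ}, reachProbFrom M σ.1 s E

/-- Maximal probability of reaching `E` from the initial state. -/
noncomputable def Pmax (M : MDP S A) (E : Set S) : ℝ≥0∞ :=
  PmaxFrom M E M.init

/-- Minimal probability of reaching `E` from `s`. -/
noncomputable def PminFrom (M : MDP S A) (E : Set S) (s : S) : ℝ≥0∞ :=
  ⨅ σ : {σ : List (A × S) → A // ValidFrom M s σ}, reachProbFrom M σ.1 s E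

/-- Minimal probability of reaching `E` from the initial state. -/
noncomputable def Pmin (M : MDP S A) (E : Set S) : ℝ≥0∞ :=
  PminFrom M E M.init

end MDP

/-- A symbolic MDP over states `Val` (valuations of the variables): a set of commands,
each with a guard and a finite-support distribution over assignments (semantically,
state transformers `Val → Val`), and an initial valuation. -/
structure SymMDP (Val : Type*) (Cmd : Type*) where
  guard : Cmd → Val → Prop
  dist : Cmd → PMF (Val → Val)
  finSupp : ∀ c, (dist c).support.Finite
  init : Val

open Classical in
/-- The MDP induced by a symbolic MDP: command `c` is enabled in `s` iff its guard
holds, and then the next-state distribution is the pushforward of `dist c` under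
evaluation at `s`. -/
noncomputable def SymMDP.toMDP {Val Cmd : Type*} (M : SymMDP Val Cmd) : MDP Val Cmd where
  P := fun s c s' => if M.guard c s then ((M.dist c).map fun a => a s) s' else 0
  init := M.init

/-- Three-valued truth values for evaluating Boolean expressions on abstract states. -/
inductive TV
  | tt
  | ff
  | uk

/-- An abstract domain over the concrete state set `Val`, with partially ordered
abstract states `AS`, abstraction `abstr`, concretization `conc`, and the Galois
condition `abstr A ≤ b ↔ A ⊆ conc b`. -/
structure AbsDom (Val : Type*) (AS : Type*) [PartialOrder AS] where
  abstr : Set Val → AS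
  conc : AS → Set Val
  galois : ∀ (A : Set Val) (b : AS), abstr A ≤ b ↔ A ⊆ conc b

namespace AbsDom

variable {Val AS : Type*} [PartialOrder AS]

open Classical in
/-- Three-valued evaluation of a Boolean expression `b` on an abstract state:
`tt` if it holds in all concretizations, `ff` if in none, `uk` otherwise. -/
noncomputable def beval (D : AbsDom Val AS) (b : Val → Prop) (x : AS) : TV :=
  if ∀ s ∈ D.conc x, b s then TV.tt
  else if ∀ s ∈ D.conc x, ¬ b s then TV.ff
  else TV.uk

/-- The abstract post operator: `post a x = abstr (a '' conc x)`. -/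
def post (D : AbsDom Val AS) (a : Val → Val) (x : AS) : AS :=
  D.abstr (a '' D.conc x)

end AbsDom

open Classical in
/-- Two-valued evaluation of a Boolean expression in a concrete state, as a `TV`. -/
noncomputable def cevalTV {Val : Type*} (b : Val → Prop) (s : Val) : TV :=
  if b s then TV.tt else TV.ff

/-- A probabilistic adaptive simulation graph (PASG). A transition edge `(n, c, f) ∈ ET`
goes from node `n` via command `c`; `f` matches each assignment in the support of `c`'s
distribution with its result node (thereby inducing the node distribution of the edge as
the pushforward of the assignment distribution). `EC n = some n'` means node `n` is
covered by its covering node `n'`; `Lc`/`La` are the concrete/abstract labelings. -/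
structure PASG (Val AS Cmd Node : Type*) where
  ET : Set (Node × Cmd × ((Val → Val) → Node))
  EC : Node → Option Node
  Lc : Node → Val
  La : Node → AS

namespace PASG

variable {Val AS Cmd Node : Type*} [PartialOrder AS]

/-- A node is covered iff it has an outgoing covering edge. -/
def Covered (P : PASG Val AS Cmd Node) (n : Node) : Prop := P.EC n ≠ none

/-- A node is expanded iff every command enabled in its concrete label has a
transition edge. -/
def Expanded (M : SymMDP Val Cmd) (P : PASG Val AS Cmd Node) (n : Node) : Prop :=
  ∀ c, M.guard c (P.Lc n) → ∃ f, (n, c, f) ∈ P.ET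

/-- A PASG is finished iff every node is covered or expanded. -/
def Finished (M : SymMDP Val Cmd) (P : PASG Val AS Cmd Node) : Prop :=
  ∀ n, P.Covered n ∨ P.Expanded M n

/-- The well-labeledness constraints A1, A2, B1, B2, C1, C2, C3, D1. -/
structure WellLabeled (M : SymMDP Val Cmd) (D : AbsDom Val AS)
    (P : PASG Val AS Cmd Node) : Prop where
  /-- A1: the abstract label contains the concrete label. -/
  A1 : ∀ n, P.Lc n ∈ D.conc (P.La n)
  /-- A2: the concrete label exactly represents the abstract label w.r.t. enabledness. -/
  A2 : ∀ n c, D.beval (M.guard c) (P.La n) = cevalTV (M.guard c) (P.Lc n)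
  /-- B1: the command of a transition edge is enabled in the concrete label of its source. -/
  B1 : ∀ e ∈ P.ET, M.guard e.2.1 (P.Lc e.1)
  /-- B2 (probabilities): result nodes of distinct assignments are distinct, hence the
  induced node distribution gives each result node exactly the assignment's probability. -/
  B2inj : ∀ e ∈ P.ET, Set.InjOn e.2.2 (M.dist e.2.1).support
  /-- B2 (concrete labels): the concrete label of a result node is the result of the
  corresponding assignment. -/
  B2c : ∀ e ∈ P.ET, ∀ a ∈ (M.dist e.2.1).support, P.Lc (e.2.2 a) = a (P.Lc e.1)
  /-- B2 (abstract labels): the abstract label of a result node overapproximates the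
  abstract post of the source. -/
  B2a : ∀ e ∈ P.ET, ∀ a ∈ (M.dist e.2.1).support, D.post a (P.La e.1) ≤ P.La (e.2.2 a)
  /-- C1: the abstract label of the covering node contains the concrete label of the
  covered node. -/
  C1 : ∀ n n', P.EC n = some n' → P.Lc n ∈ D.conc (P.La n')
  /-- C2: the covering node is at least as abstract as the covered node. -/
  C2 : ∀ n n', P.EC n = some n' → P.La n ≤ P.La n'
  /-- C3: a covering node is not itself covered. -/
  C3 : ∀ n n', P.EC n = some n' → P.EC n' = none
  /-- D1: at most one node with a given concrete label is non-covered. -/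
  D1 : ∀ n n', n ≠ n' → P.Lc n = P.Lc n' → P.Covered n ∨ P.Covered n'

open Classical in
/-- The MDP induced by a finished PASG with root `n₀`: in a non-covered node a command
is enabled iff it has a transition edge (with the induced node distribution); a covered
node has only the extra `cover` action (`Sum.inr ()`), leading with probability `1` to
its covering node. -/
noncomputable def toMDP (M : SymMDP Val Cmd) (P : PASG Val AS Cmd Node) (n₀ : Node) :
    MDP Node (Cmd ⊕ Unit) where
  init := n₀
  P := fun n act m =>
    match act with
    | Sum.inl c =>
        if h : P.EC n = none ∧ ∃ f, (n, c, f) ∈ P.ET then ((M.dist c).map h.2.choose) m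
        else 0
    | Sum.inr _ =>
        match P.EC n with
        | some n' => if m = n' then 1 else 0
        | none => 0

end PASG

/-! ### Step-bounded reachability -/

namespace MDP

variable {S A : Type*}

open Classical in
/-- Probability of reaching `E` from `s` under `σ` within `k` steps, by recursion on `k`: the
continuation after a step to `s'` is `σ` with that step prepended to the history. -/
noncomputable def reachB (M : MDP S A) (E : Set S) : ℕ → S → (List (A × S) → A) → ℝ≥0∞
  | 0, s, _ => if s ∈ E then 1 else 0
  | k + 1, s, σ =>
      if s ∈ E then 1
      else ∑' s', M.P s (σ []) s' * reachB M E k s' (fun h => σ ((σ [], s') :: h))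

lemma reachB_of_mem (M : MDP S A) {E : Set S} (k : ℕ) {s : S} (hs : s ∈ E)
    (σ : List (A × S) → A) : reachB M E k s σ = 1 := by
  cases k <;> simp [reachB, hs]

lemma reachB_le_succ (M : MDP S A) (E : Set S) (k : ℕ) (s : S) (σ : List (A × S) → A) :
    reachB M E k s σ ≤ reachB M E (k + 1) s σ := by
  induction k generalizing s σ with
  | zero =>
    by_cases hs : s ∈ E
    · simp [reachB_of_mem M _ hs]
    · simp [reachB, hs]
  | succ k ih =>
    by_cases hs : s ∈ E
    · simp [reachB_of_mem M _ hs]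
    · rw [reachB, reachB, if_neg hs, if_neg hs]
      exact ENNReal.tsum_le_tsum fun s' => mul_le_mul_right (ih _ _) _

lemma pathProb_shift (M : MDP S A) (σ : List (A × S) → A) (s : S) (h l : List (A × S)) :
    pathProb M σ s h l = pathProb M (fun g => σ (h ++ g)) s [] l := by
  induction l generalizing s h σ with
  | nil => simp [pathProb]
  | cons p l ih =>
    obtain ⟨a, s'⟩ := p
    simp only [pathProb, List.append_nil, List.nil_append]
    rw [ih σ s' (h ++ [(a, s')]), ih (fun g => σ (h ++ g)) s' [(a, s')]]
    by_cases ha : σ h = a <;> simp [ha]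

lemma tsum_list {α : Type*} (f : List α → ℝ≥0∞) :
    ∑' l, f l = f [] + ∑' p : α, ∑' l, f (p :: l) := by
  let e : Unit ⊕ (α × List α) ≃ List α :=
    { toFun := Sum.elim (fun _ => []) (fun p => p.1 :: p.2)
      invFun := fun l => match l with
        | [] => Sum.inl ()
        | a :: l => Sum.inr (a, l)
      left_inv := by rintro (_ | ⟨a, l⟩) <;> rfl
      right_inv := by rintro (_ | ⟨a, l⟩) <;> rfl }
  rw [← e.tsum_eq f, Summable.tsum_sum ENNReal.summable ENNReal.summable, ENNReal.tsum_prod',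
    tsum_fintype]
  simp [e]

open Classical in
lemma tsum_bounded_eq_reachB (M : MDP S A) (E : Set S) (k : ℕ) (s : S)
    (σ : List (A × S) → A) :
    ∑' l, (if FirstHit E s l ∧ l.length ≤ k then pathProb M σ s [] l else 0)
      = reachB M E k s σ := by
  induction k generalizing s σ with
  | zero =>
    rw [tsum_list]
    simp [reachB, FirstHit, pathProb]
  | succ k ih =>
    rw [tsum_list]
    by_cases hs : s ∈ E
    · simp [reachB, FirstHit, pathProb, hs]
    · rw [ENNReal.tsum_prod']
      rw [tsum_eq_single (σ [])]
      · simp only [FirstHit, hs, reachB, pathProb, List.nil_append, if_true, if_false,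
          false_and, zero_add, not_false_eq_true, true_and, List.length_cons,
          add_le_add_iff_right]
        refine tsum_congr fun s' => ?_
        rw [← ih, ← ENNReal.tsum_mul_left]
        refine tsum_congr fun l => ?_
        rw [pathProb_shift]
        split_ifs <;> simp
      · intro a ha
        simp [pathProb, Ne.symm ha]

/-- The reachability probability is the supremum of the step-bounded ones: a finite set of paths
has bounded length. -/
lemma reachProbFrom_eq_iSup (M : MDP S A) (E : Set S) (s : S) (σ : List (A × S) → A) :
    reachProbFrom M σ s E = ⨆ k, reachB M E k s σ := by
  classical
  have h0 : reachProbFrom M σ s E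
      = ∑' l, (if FirstHit E s l then pathProb M σ s [] l else 0) := by
    refine (tsum_subtype {l | FirstHit E s l} (fun l => pathProb M σ s [] l)).trans ?_
    refine tsum_congr fun l => ?_
    simp [Set.indicator_apply]
  rw [h0]
  apply le_antisymm
  · rw [ENNReal.tsum_eq_iSup_sum]
    refine iSup_le fun F => ?_
    refine le_iSup_of_le (F.sup List.length) ?_
    rw [← tsum_bounded_eq_reachB]
    refine le_trans (Finset.sum_le_sum fun l hl => ?_) (ENNReal.sum_le_tsum F)
    have := Finset.le_sup (f := List.length) hl
    simp [this]
  · refine iSup_le fun k => ?_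
    rw [← tsum_bounded_eq_reachB]
    refine ENNReal.tsum_le_tsum fun l => ?_
    by_cases h1 : FirstHit E s l <;> by_cases h2 : l.length ≤ k <;> simp [h1, h2]

lemma lastSt_cons (s : S) (p : A × S) (h : List (A × S)) :
    lastSt s (p :: h) = lastSt p.2 h := by
  cases h using List.reverseRecOn with
  | nil => simp [lastSt]
  | append_singleton l a => simp [lastSt, List.getLast?_cons]

lemma exists_valid [Nonempty A] (M : MDP S A) (s : S) : ∃ σ, ValidFrom M s σ := by
  classical
  refine ⟨fun h => if H : ∃ a, M.Enabled (lastSt s h) a then H.choose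
    else Classical.arbitrary A, fun h H => ?_⟩
  simp only [dif_pos H]
  exact H.choose_spec

/-- An enabled first action and a valid strategy from each successor combine to a valid strategy,
and its step-bounded reachability satisfies the corresponding recursion. -/
lemma exists_glue (M : MDP S A) {E : Set S} {s : S} (hs : s ∉ E) {a : A} (ha : M.Enabled s a)
    (T : S → List (A × S) → A) (hT : ∀ s', ValidFrom M s' (T s')) :
    ∃ τ, ValidFrom M s τ ∧
      ∀ k, reachB M E (k + 1) s τ = ∑' s', M.P s a s' * reachB M E k s' (T s') := by
  refine ⟨fun h => match h with
    | [] => a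
    | p :: h => T p.2 h, ?_, fun k => ?_⟩
  · rintro (_ | ⟨p, h⟩) H
    · exact ha
    · rw [lastSt_cons] at H ⊢
      exact hT _ _ H
  · rw [reachB, if_neg hs]

end MDP

lemma PMF.tsum_map_mul {α β : Type*} (p : PMF α) (g : α → β) (F : β → ℝ≥0∞) :
    ∑' b, (p.map g) b * F b = ∑' a, p a * F (g a) := by
  classical
  simp only [PMF.map_apply, ← ENNReal.tsum_mul_right]
  rw [ENNReal.tsum_comm]
  refine tsum_congr fun a => ?_
  rw [tsum_eq_single (g a)]
  · simp
  · intro b hb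
    simp [hb]

/-! ### The simulation by a well-labeled graph -/

namespace PASG

variable {Val AS Cmd Node : Type*} [PartialOrder AS]

lemma WellLabeled.guard_iff {M : SymMDP Val Cmd} {D : AbsDom Val AS} {P : PASG Val AS Cmd Node}
    (hwl : WellLabeled M D P) {s : Val} {n : Node} (h : s ∈ D.conc (P.La n)) (c : Cmd) :
    M.guard c s ↔ M.guard c (P.Lc n) := by
  have h2 := hwl.A2 n c
  unfold AbsDom.beval cevalTV at h2
  split_ifs at h2 with h3 h4 h5 h6
  · exact ⟨fun _ => h4, fun _ => h3 s h⟩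
  · exact ⟨fun hs => absurd hs (h5 s h), fun hn => absurd hn h6⟩

lemma _root_.AbsDom.conc_mono (D : AbsDom Val AS) {x y : AS} (h : x ≤ y) :
    D.conc x ⊆ D.conc y :=
  (D.galois _ _).1 (((D.galois _ _).2 subset_rfl).trans h)

/-- One step of `M` from `s`, matched from a related node that is not covered. -/
lemma exists_valid_reachB_le_of_not_covered {M : SymMDP Val Cmd} {D : AbsDom Val AS}
    {P : PASG Val AS Cmd Node} (tc : Cmd) (hwl : WellLabeled M D P) (hfin : Finished M P)
    (n₀ : Node) (k j : ℕ)
    (ih : ∀ (s : Val) (n : Node) (σ : List (Cmd × Val) → Cmd), s ∈ D.conc (P.La n) →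
      ∃ τ, MDP.ValidFrom (toMDP M P n₀) n τ ∧
        MDP.reachB M.toMDP {s | M.guard tc s} k s σ ≤
          MDP.reachB (toMDP M P n₀) {n | M.guard tc (P.Lc n)} j n τ)
    (s : Val) (n : Node) (σ : List (Cmd × Val) → Cmd) (hsn : s ∈ D.conc (P.La n))
    (hn : P.EC n = none) :
    ∃ τ, MDP.ValidFrom (toMDP M P n₀) n τ ∧
      MDP.reachB M.toMDP {s | M.guard tc s} (k + 1) s σ ≤
        MDP.reachB (toMDP M P n₀) {n | M.guard tc (P.Lc n)} (j + 1) n τ := by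
  classical
  have : Nonempty (Cmd ⊕ Unit) := ⟨Sum.inr ()⟩
  obtain ⟨τ₀, hτ₀⟩ := MDP.exists_valid (toMDP M P n₀) n
  by_cases hs : M.guard tc s
  · refine ⟨τ₀, hτ₀, ?_⟩
    rw [MDP.reachB_of_mem _ _ (by exact hs),
      MDP.reachB_of_mem _ _ (by exact (hwl.guard_iff hsn tc).1 hs)]
  have hnt : ¬ M.guard tc (P.Lc n) := fun h => hs ((hwl.guard_iff hsn tc).2 h)
  set c := σ [] with hc
  by_cases hg : M.guard c s
  swap
  · -- A disabled choice of `σ` has transition mass zero.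
    refine ⟨τ₀, hτ₀, ?_⟩
    rw [MDP.reachB, if_neg (by exact hs)]
    simp [SymMDP.toMDP, ← hc, hg]
  have hex : ∃ f, (n, c, f) ∈ P.ET :=
    ((hfin n).resolve_left (by simp [Covered, hn])) c ((hwl.guard_iff hsn c).1 hg)
  have hP : ∀ m, (toMDP M P n₀).P n (Sum.inl c) m = ((M.dist c).map hex.choose) m := by
    intro m
    simp [toMDP, hn, hex]
  have hf := hex.choose_spec
  set f := hex.choose
  have hena : (toMDP M P n₀).Enabled n (Sum.inl c) := by
    simp only [MDP.Enabled, hP]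
    exact PMF.tsum_coe _
  -- The strategy after reaching `m` matches the continuation after an assignment leading to `m`.
  have hT : ∀ m, ∃ τ, MDP.ValidFrom (toMDP M P n₀) m τ ∧
      ∀ a ∈ (M.dist c).support, f a = m →
        MDP.reachB M.toMDP {s | M.guard tc s} k (a s) (fun h => σ ((c, a s) :: h)) ≤
          MDP.reachB (toMDP M P n₀) {n | M.guard tc (P.Lc n)} j m τ := by
    intro m
    by_cases hm : ∃ a ∈ (M.dist c).support, f a = m
    · obtain ⟨a, ha, rfl⟩ := hm
      have hrel : a s ∈ D.conc (P.La (f a)) :=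
        (D.galois _ _).1 (hwl.B2a _ hf a ha) ⟨s, hsn, rfl⟩
      obtain ⟨τ, hτ, hle⟩ := ih (a s) (f a) (fun h => σ ((c, a s) :: h)) hrel
      refine ⟨τ, hτ, fun a' ha' he => ?_⟩
      obtain rfl : a' = a := hwl.B2inj _ hf ha' ha he
      exact hle
    · obtain ⟨τ, hτ⟩ := MDP.exists_valid (toMDP M P n₀) m
      exact ⟨τ, hτ, fun a ha he => absurd ⟨a, ha, he⟩ hm⟩
  choose T hTv hTle using hT
  obtain ⟨τ, hτ, hrec⟩ := MDP.exists_glue (toMDP M P n₀)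
    (E := {n | M.guard tc (P.Lc n)}) (by exact hnt) hena T hTv
  refine ⟨τ, hτ, ?_⟩
  rw [hrec, MDP.reachB, if_neg (by exact hs)]
  simp only [hP, ← hc, SymMDP.toMDP, if_pos hg]
  rw [PMF.tsum_map_mul, PMF.tsum_map_mul]
  refine ENNReal.tsum_le_tsum fun a => ?_
  by_cases ha : a ∈ (M.dist c).support
  · exact mul_le_mul_right (hTle (f a) a ha rfl) _
  · rw [PMF.mem_support_iff, not_not] at ha
    simp [ha]

/-- The bound `2 * k + 1` allows for a covering step before each step of `M`. -/
lemma exists_valid_reachB_le {M : SymMDP Val Cmd} {D : AbsDom Val AS}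
    {P : PASG Val AS Cmd Node} (tc : Cmd) (hwl : WellLabeled M D P) (hfin : Finished M P)
    (n₀ : Node) (k : ℕ) (s : Val) (n : Node) (σ : List (Cmd × Val) → Cmd)
    (hsn : s ∈ D.conc (P.La n)) :
    ∃ τ, MDP.ValidFrom (toMDP M P n₀) n τ ∧
      MDP.reachB M.toMDP {s | M.guard tc s} k s σ ≤
        MDP.reachB (toMDP M P n₀) {n | M.guard tc (P.Lc n)} (2 * k + 1) n τ := by
  classical
  have : Nonempty (Cmd ⊕ Unit) := ⟨Sum.inr ()⟩
  induction k generalizing s n σ with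
  | zero =>
    obtain ⟨τ₀, hτ₀⟩ := MDP.exists_valid (toMDP M P n₀) n
    refine ⟨τ₀, hτ₀, ?_⟩
    by_cases hs : M.guard tc s
    · rw [MDP.reachB_of_mem _ _ (by exact hs),
        MDP.reachB_of_mem _ _ (by exact (hwl.guard_iff hsn tc).1 hs)]
    · rw [MDP.reachB, if_neg (by exact hs)]
      exact zero_le
  | succ k ih =>
    have key := exists_valid_reachB_le_of_not_covered tc hwl hfin n₀ k (2 * k + 1) ih
    cases hn : P.EC n with
    | none =>
      obtain ⟨τ, hτ, hle⟩ := key s n σ hsn hn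
      exact ⟨τ, hτ, hle.trans (MDP.reachB_le_succ _ _ _ _ _)⟩
    | some n' =>
      have hsn' : s ∈ D.conc (P.La n') := D.conc_mono (hwl.C2 n n' hn) hsn
      obtain ⟨τ', hτ', hle⟩ := key s n' σ hsn' (hwl.C3 n n' hn)
      by_cases hs : M.guard tc s
      · obtain ⟨τ₀, hτ₀⟩ := MDP.exists_valid (toMDP M P n₀) n
        refine ⟨τ₀, hτ₀, ?_⟩
        rw [MDP.reachB_of_mem _ _ (by exact hs),
          MDP.reachB_of_mem _ _ (by exact (hwl.guard_iff hsn tc).1 hs)]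
      have hnt : ¬ M.guard tc (P.Lc n) := fun h => hs ((hwl.guard_iff hsn tc).2 h)
      have hP : ∀ m, (toMDP M P n₀).P n (Sum.inr ()) m = if m = n' then 1 else 0 := by
        intro m
        simp [toMDP, hn]
      have hena : (toMDP M P n₀).Enabled n (Sum.inr ()) := by
        simp [MDP.Enabled, hP]
      have hT : ∀ m, ∃ τ, MDP.ValidFrom (toMDP M P n₀) m τ ∧
          (m = n' → τ = τ') := by
        intro m
        by_cases hm : m = n'
        · subst hm
          exact ⟨τ', hτ', fun _ => rfl⟩
        · obtain ⟨τ, hτ⟩ := MDP.exists_valid (toMDP M P n₀) m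
          exact ⟨τ, hτ, fun h => absurd h hm⟩
      choose T hTv hTe using hT
      obtain ⟨τ, hτ, hrec⟩ := MDP.exists_glue (toMDP M P n₀)
        (E := {n | M.guard tc (P.Lc n)}) (by exact hnt) hena T hTv
      refine ⟨τ, hτ, hle.trans ?_⟩
      rw [show 2 * (k + 1) + 1 = (2 * k + 1 + 1) + 1 by ring, hrec, tsum_eq_single n']
      · simp [hP, hTe n' rfl]
      · intro m hm
        simp [hP, hm]

end PASG

/-- The maximal probability of reaching a target node in the MDP
induced by a well-labeled finished PASG `P` for `M` (rooted at `n₀`, labeled by the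
initial valuation) is at least the maximal probability of reaching a target state
in `M`. -/
theorem pasg_upper_soundness {Val AS Cmd Node : Type*} [PartialOrder AS] [Finite Cmd]
    (M : SymMDP Val Cmd) (D : AbsDom Val AS) (P : PASG Val AS Cmd Node)
    (φ : Val → Prop) (tc : Cmd)
    (htcg : ∀ s, M.guard tc s ↔ φ s) (htcd : M.dist tc = PMF.pure id)
    (hwl : PASG.WellLabeled M D P) (hfin : PASG.Finished M P)
    (n₀ : Node) (hroot : P.Lc n₀ = M.init) :
    MDP.Pmax M.toMDP {s | M.guard tc s} ≤
      MDP.Pmax (PASG.toMDP M P n₀) {n | M.guard tc (P.Lc n)} := by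
  refine iSup_le fun σ => ?_
  rw [MDP.reachProbFrom_eq_iSup]
  refine iSup_le fun k => ?_
  obtain ⟨τ, hτ, hle⟩ := PASG.exists_valid_reachB_le tc hwl hfin n₀ k M.init n₀ σ.1
    (hroot ▸ hwl.A1 n₀)
  refine hle.trans (le_iSup_of_le ⟨τ, hτ⟩ ?_)
  rw [MDP.reachProbFrom_eq_iSup]
  exact le_iSup (fun k => MDP.reachB (PASG.toMDP M P n₀) {n | M.guard tc (P.Lc n)} k n₀ τ) _
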